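/- For p ∈ ℕ, let K_p(x,y) = (1 + ⟨x,y⟩)^p be the finite polynomial kernel on ℝ^d, where ⟨·,·⟩ is the standard inner product on ℝ^d. For p, q ∈ ℕ: (a) there exists λ ≥ 0 such that λK_q − K_p is a positive semidefinite kernel on ℝ^d if and only if p ≤ q; (b) if p ≤ q, the least such λ equals 1. -/

import Mathlib

open scoped ComplexOrder

/-- A function `K : X × X → ℂ` is a positive semidefinite kernel if every finite
quadratic form `∑ j, ∑ k, c j * conj (c k) * K (x j) (x k)` is a nonnegative real number. -/
def IsPSDKernel {X : Type*} (K : X → X → ℂ) : Prop :=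
  ∀ (n : ℕ) (x : Fin n → X) (c : Fin n → ℂ),
    0 ≤ ∑ j, ∑ k, c j * (starRingEnd ℂ) (c k) * K (x j) (x k)

/-- The finite polynomial kernel `K_p(x,y) = (1 + ⟨x,y⟩)^p` on `ℝ^d`. -/
noncomputable def polyK (d p : ℕ) (x y : EuclideanSpace ℝ (Fin d)) : ℂ :=
  (((1 + (inner ℝ x y : ℝ)) ^ p : ℝ) : ℂ)

/-! For `p ≤ q` and a positive semidefinite kernel `L`, the difference `(1 + L)^q - (1 + L)^p`
telescopes into the kernels `(1 + L)^n * L` with `p ≤ n < q`, which are positive semidefinite by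
the Schur product theorem. Conversely, if `lam * (1 + L)^q` dominates `(1 + L)^p`, then so it does
on the diagonal: a point where `L` vanishes gives `1 ≤ lam`, while `q < p` would bound the
diagonal of `1 + L` by `lam`. -/

theorem posSemidef_iff_forall_dotProduct_mulVec_nonneg {n : Type*} [Fintype n]
    {A : Matrix n n ℂ} : A.PosSemidef ↔ ∀ v, 0 ≤ star v ⬝ᵥ A.mulVec v := by
  classical
  refine ⟨fun hA => hA.dotProduct_mulVec_nonneg, fun h => ?_⟩
  have hsymm : A.toEuclideanLin.IsSymmetric := by
    rw [LinearMap.isSymmetric_iff_inner_map_self_real]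
    intro v
    have inner_nonneg : 0 ≤ inner ℂ v (A.toEuclideanLin v) := by
      rw [EuclideanSpace.inner_eq_star_dotProduct, dotProduct_comm]
      exact h v.ofLp
    rw [inner_conj_symm, ← inner_conj_symm (A.toEuclideanLin v)]
    exact (IsSelfAdjoint.of_nonneg inner_nonneg).star_eq.symm
  exact .of_dotProduct_mulVec_nonneg (Matrix.isSymmetric_toEuclideanLin_iff.mp hsymm) h

open scoped MatrixOrder in
theorem posSemidef_map_ofReal {n : Type*} [Finite n] {A : Matrix n n ℝ} (hA : A.PosSemidef) :
    (A.map Complex.ofReal).PosSemidef := by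
  classical
  have := Fintype.ofFinite n
  obtain ⟨B, rfl⟩ := CStarAlgebra.nonneg_iff_eq_star_mul_self.mp hA.nonneg
  have factor : (star B * B).map Complex.ofReal =
      (B.map Complex.ofReal).conjTranspose * B.map Complex.ofReal := by
    ext i j
    simp [Matrix.mul_apply]
  rw [factor]
  exact Matrix.posSemidef_conjTranspose_mul_self _

section Kernels

variable {X : Type*} {K L : X → X → ℂ}

theorem isPSDKernel_iff_posSemidef : IsPSDKernel K ↔
    ∀ (n : ℕ) (x : Fin n → X), (Matrix.of fun j k => K (x j) (x k)).PosSemidef := by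
  have quadForm_eq (n : ℕ) (x : Fin n → X) (v : Fin n → ℂ) :
      star v ⬝ᵥ (Matrix.of fun j k => K (x j) (x k)).mulVec v =
        ∑ j, ∑ k, star v j * (starRingEnd ℂ) (star v k) * K (x j) (x k) := by
    simp only [dotProduct, Matrix.mulVec, Matrix.of_apply, Finset.mul_sum, Pi.star_apply,
      starRingEnd_apply, star_star]
    exact Finset.sum_congr rfl fun j _ => Finset.sum_congr rfl fun k _ => by ring
  simp only [posSemidef_iff_forall_dotProduct_mulVec_nonneg, quadForm_eq]
  exact forall₂_congr fun n x => star_involutive.surjective.forall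

theorem isPSDKernel_one : IsPSDKernel (1 : X → X → ℂ) := by
  rw [isPSDKernel_iff_posSemidef]
  intro n x
  convert Matrix.posSemidef_vecMulVec_self_star (1 : Fin n → ℂ)
  ext
  simp [Matrix.vecMulVec_apply]

theorem isPSDKernel_real_inner (E : Type*) [SeminormedAddCommGroup E] [InnerProductSpace ℝ E] :
    IsPSDKernel fun x y : E => ((inner ℝ x y : ℝ) : ℂ) :=
  isPSDKernel_iff_posSemidef.mpr fun _ x => posSemidef_map_ofReal (Matrix.posSemidef_gram ℝ x)

namespace IsPSDKernel

theorem add (hK : IsPSDKernel K) (hL : IsPSDKernel L) : IsPSDKernel (K + L) := by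
  rw [isPSDKernel_iff_posSemidef] at *
  exact fun n x => (hK n x).add (hL n x)

theorem mul (hK : IsPSDKernel K) (hL : IsPSDKernel L) : IsPSDKernel (K * L) := by
  rw [isPSDKernel_iff_posSemidef] at *
  exact fun n x => (hK n x).hadamard (hL n x)

theorem pow (hK : IsPSDKernel K) (n : ℕ) : IsPSDKernel (K ^ n) := by
  induction n with
  | zero => simpa only [pow_zero] using isPSDKernel_one
  | succ n ih => simpa only [pow_succ] using ih.mul hK

theorem one_add_pow_sub_one_add_pow (hL : IsPSDKernel L) {p q : ℕ} (hpq : p ≤ q) :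
    IsPSDKernel ((1 + L) ^ q - (1 + L) ^ p) := by
  induction q, hpq using Nat.le_induction with
  | base =>
    intro n x c
    simp
  | succ n _ ih =>
    have telescope : (1 + L) ^ (n + 1) - (1 + L) ^ p =
        ((1 + L) ^ n - (1 + L) ^ p) + (1 + L) ^ n * L := by ring
    rw [telescope]
    exact ih.add (((isPSDKernel_one.add hL).pow n).mul hL)

theorem diag_nonneg (hK : IsPSDKernel K) (x : X) : 0 ≤ K x x := by
  simpa using hK 1 (fun _ => x) 1

theorem one_add_diag_pow_le {lam : ℝ} {p q : ℕ}
    (h : IsPSDKernel ((lam : ℂ) • (1 + L) ^ q - (1 + L) ^ p)) {x : X} {t : ℝ} (hx : L x x = t) :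
    (1 + t) ^ p ≤ lam * (1 + t) ^ q := by
  have hdiag := h.diag_nonneg x
  simp only [Pi.sub_apply, Pi.smul_apply, Pi.pow_apply, Pi.add_apply, Pi.one_apply, hx,
    smul_eq_mul, sub_nonneg] at hdiag
  exact_mod_cast hdiag

end IsPSDKernel

end Kernels

theorem le_of_pow_le_mul_pow {R : Type*} [Semiring R] [LinearOrder R] [IsStrictOrderedRing R]
    {t lam : R} {p q : ℕ} (ht : 1 ≤ t) (hqp : q < p) (h : t ^ p ≤ lam * t ^ q) : t ≤ lam := by
  have ht_pow : 0 < t ^ q := pow_pos (zero_lt_one.trans_le ht) q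
  refine le_of_mul_le_mul_right ?_ ht_pow
  calc t * t ^ q = t ^ (q + 1) := (pow_succ' t q).symm
    _ ≤ t ^ p := pow_le_pow_right₀ ht hqp
    _ ≤ lam * t ^ q := h

theorem exists_le_real_inner_self (E : Type*) [NormedAddCommGroup E] [InnerProductSpace ℝ E]
    [Nontrivial E] (C : ℝ) : ∃ x : E, C ≤ inner ℝ x x := by
  obtain ⟨x, hx⟩ := exists_norm_eq E (Real.sqrt_nonneg |C|)
  refine ⟨x, ?_⟩
  rw [real_inner_self_eq_norm_sq, hx, Real.sq_sqrt (abs_nonneg C)]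
  exact le_abs_self C

theorem polyKernel_inclusion_general {X : Type*} {L : X → X → ℂ} (hL : IsPSDKernel L)
    (hzero : ∃ x, L x x = 0) (hunbounded : ∀ C : ℝ, ∃ x, (C : ℂ) ≤ L x x) (p q : ℕ) :
    ((∃ lam : ℝ, 0 ≤ lam ∧ IsPSDKernel ((lam : ℂ) • (1 + L) ^ q - (1 + L) ^ p)) ↔ p ≤ q) ∧
    (p ≤ q →
      IsLeast {lam : ℝ | 0 ≤ lam ∧ IsPSDKernel ((lam : ℂ) • (1 + L) ^ q - (1 + L) ^ p)} 1) := by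
  have one_mem (hpq : p ≤ q) :
      0 ≤ (1 : ℝ) ∧ IsPSDKernel (((1 : ℝ) : ℂ) • (1 + L) ^ q - (1 + L) ^ p) := by
    simpa using hL.one_add_pow_sub_one_add_pow hpq
  refine ⟨⟨?_, fun hpq => ⟨1, one_mem hpq⟩⟩, fun hpq => ⟨one_mem hpq, ?_⟩⟩
  · rintro ⟨lam, hlam, hdom⟩
    by_contra! hqp
    obtain ⟨x, hx⟩ := hunbounded lam
    obtain ⟨t, ht⟩ : ∃ t : ℝ, L x x = t := ⟨_, Complex.eq_re_of_ofReal_le hx⟩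
    have hlt : lam ≤ t := by exact_mod_cast ht ▸ hx
    have hle : 1 + t ≤ lam :=
      le_of_pow_le_mul_pow (by linarith) hqp (hdom.one_add_diag_pow_le ht)
    linarith
  · rintro lam ⟨-, hdom⟩
    obtain ⟨x, hx⟩ := hzero
    simpa using hdom.one_add_diag_pow_le (t := 0) (by simpa using hx)

theorem polyK_eq_one_add_inner_pow (d p : ℕ) :
    polyK d p = (1 + fun x y => ((inner ℝ x y : ℝ) : ℂ)) ^ p := by
  ext x y
  simp [polyK]

/-- (a) Some `λ ≥ 0` makes `λK_q − K_p` positive semidefinite iff `p ≤ q`;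
(b) if `p ≤ q` then the least such `λ` equals `1`. -/
theorem polyKernel_inclusion (d : ℕ) (hd : 0 < d) (p q : ℕ) :
    ((∃ lam : ℝ, 0 ≤ lam ∧
        IsPSDKernel (fun x y : EuclideanSpace ℝ (Fin d) =>
          (lam : ℂ) * polyK d q x y - polyK d p x y)) ↔ p ≤ q) ∧
    (p ≤ q →
      IsLeast {lam : ℝ | 0 ≤ lam ∧
          IsPSDKernel (fun x y : EuclideanSpace ℝ (Fin d) =>
            (lam : ℂ) * polyK d q x y - polyK d p x y)} 1) := by
  have : NeZero d := ⟨hd.ne'⟩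
  simp only [polyK_eq_one_add_inner_pow]
  exact polyKernel_inclusion_general (isPSDKernel_real_inner _) ⟨0, by simp⟩
    (fun C => by exact_mod_cast exists_le_real_inner_self (EuclideanSpace ℝ (Fin d)) C) p q
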